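/- arXiv:1909.11027 — 2 statements merged into one kernel-verified Lean document; each statement's English description precedes it below -/
import Mathlib

section
/- Let μ be a permuton. Suppose that for (μ⊗μ)-almost every pair of points ((x_1,y_1),(x_2,y_2)) ∈ ([0,1]²)² with x_1 < x_2 and y_2 < y_1, the quantities a_{ij} = μ([x_{i−1},x_i]×[t_{j−1},t_j]) for i,j ∈ {1,2,3} (where x_0 = t_0 = 0, x_3 = t_3 = 1, t_1 = y_2, t_2 = y_1) satisfy a_{22}(a_{11} + a_{13} + a_{31} + a_{33}) − (a_{21} + a_{23})(a_{12} + a_{32}) = 0. Then μ([x_1,x_2]×[y_2,y_1]) = (x_2−x_1)(y_1−y_2) for all points (x_1,y_1),(x_2,y_2) ∈ supp μ with x_1 ≤ x_2 and y_2 ≤ y_1. -/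
open MeasureTheory Filter

noncomputable section

/-- A permuton: a Borel probability measure on `ℝ × ℝ` (supported on `[0,1]²`)
with uniform marginals. -/
def IsPermuton (μ : Measure (ℝ × ℝ)) : Prop :=
  IsProbabilityMeasure μ ∧
    (∀ x x' : ℝ, 0 ≤ x → x ≤ x' → x' ≤ 1 →
      μ (Set.Icc x x' ×ˢ Set.Icc (0 : ℝ) 1) = ENNReal.ofReal (x' - x)) ∧
    (∀ y y' : ℝ, 0 ≤ y → y ≤ y' → y' ≤ 1 →
      μ (Set.Icc (0 : ℝ) 1 ×ˢ Set.Icc y y') = ENNReal.ofReal (y' - y))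

/-- The uniform permuton: two-dimensional Lebesgue measure on `[0,1]²`. -/
def uniformPermuton : Measure (ℝ × ℝ) :=
  volume.restrict (Set.Icc (0 : ℝ) 1 ×ˢ Set.Icc (0 : ℝ) 1)

/-- The support of a Borel measure: all points each of whose open neighbourhoods has
positive measure. -/
def measSupport (μ : Measure (ℝ × ℝ)) : Set (ℝ × ℝ) :=
  {p | ∀ U : Set (ℝ × ℝ), IsOpen U → p ∈ U → 0 < μ U}

/-- The pattern density of a `k`-permutation `π` in a measure `μ` on `ℝ × ℝ`:
the `μ^{⊗ k}`-probability that `k` sampled points, relabelled so that their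
`x`-coordinates increase, have `y`-coordinates ordered according to `π`. -/
def PermutonDensity {k : ℕ} (π : Equiv.Perm (Fin k)) (μ : Measure (ℝ × ℝ)) : ℝ :=
  ((Measure.pi fun _ : Fin k => μ)
    {p : Fin k → ℝ × ℝ | ∃ σ : Equiv.Perm (Fin k),
      StrictMono (fun i => (p (σ i)).1) ∧
        ∀ i j : Fin k, (p (σ i)).2 < (p (σ j)).2 ↔ π i < π j}).toReal

open scoped Classical in
/-- The pattern density of a `k`-permutation `π` in an `n`-permutation `Π`:
the proportion of `k`-element subsets of `Fin n` on which `Π` induces the pattern `π`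
(zero when `n < k`). -/
def PatternDensity {k n : ℕ} (π : Equiv.Perm (Fin k)) (Perm : Equiv.Perm (Fin n)) : ℝ :=
  ((Finset.univ.filter fun A : Finset (Fin n) =>
      ∃ h : A.card = k, ∀ i j : Fin k,
        Perm ↑(A.orderIsoOfFin h i) < Perm ↑(A.orderIsoOfFin h j) ↔ π i < π j).card : ℝ) /
    (n.choose k)

/-- A sequence of permutations (of varying orders) is quasirandom if the density of every
pattern `π` converges to `1/|π|!`. -/
def Quasirandom (P : ℕ → (n : ℕ) × Equiv.Perm (Fin n)) : Prop :=
  ∀ (k : ℕ) (π : Equiv.Perm (Fin k)),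
    Tendsto (fun i => PatternDensity π (P i).2) atTop (nhds (1 / (Nat.factorial k : ℝ)))

/-- A set `S` of `k`-permutations is `Σ`-forcing if a sequence of permutations is quasirandom
exactly when the sum of the densities of the patterns from `S` converges to `|S|/k!`. -/
def SigmaForcing {k : ℕ} (S : Finset (Equiv.Perm (Fin k))) : Prop :=
  ∀ P : ℕ → (n : ℕ) × Equiv.Perm (Fin n),
    Quasirandom P ↔
      Tendsto (fun i => ∑ π ∈ S, PatternDensity π (P i).2) atTop
        (nhds ((S.card : ℝ) / (Nat.factorial k : ℝ)))

/-- The `4`-permutation written in one-line notation as `(a+1)(b+1)(c+1)(d+1)`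
(inputs are 0-indexed). -/
def mk4 (a b c d : Fin 4) (h : Function.Bijective ![a, b, c, d] := by decide) :
    Equiv.Perm (Fin 4) :=
  Equiv.ofBijective _ h

/-- A doubly stochastic matrix: non-negative entries, all row and column sums equal to one. -/
def IsDoublyStochastic {n : ℕ} (A : Matrix (Fin n) (Fin n) ℝ) : Prop :=
  (∀ i j, 0 ≤ A i j) ∧ (∀ i, ∑ j, A i j = 1) ∧ (∀ j, ∑ i, A i j = 1)

/-- The step permuton `μ[A]` associated with an `n × n` doubly stochastic matrix `A`. -/
def stepPermuton {n : ℕ} (A : Matrix (Fin n) (Fin n) ℝ) : Measure (ℝ × ℝ) :=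
  ∑ i : Fin n, ∑ j : Fin n,
    ENNReal.ofReal (A i j * n) •
      volume.restrict
        (Set.Ico ((i : ℝ) / n) (((i : ℝ) + 1) / n) ×ˢ
          Set.Ico ((j : ℝ) / n) (((j : ℝ) + 1) / n))

/-- The matrix `B^{ij}` (0-indexed: `p, q ∈ [n-1]`): `+1` at positions `(p,q)` and
`(p+1,q+1)`, `-1` at positions `(p,q+1)` and `(p+1,q)`, `0` elsewhere. -/
def Bmat (n : ℕ) (p q : Fin (n - 1)) : Matrix (Fin n) (Fin n) ℝ := fun a b =>
  (if (a : ℕ) = (p : ℕ) ∧ (b : ℕ) = (q : ℕ) then 1 else 0) +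
    (if (a : ℕ) = (p : ℕ) + 1 ∧ (b : ℕ) = (q : ℕ) + 1 then 1 else 0) -
    (if (a : ℕ) = (p : ℕ) ∧ (b : ℕ) = (q : ℕ) + 1 then 1 else 0) -
    (if (a : ℕ) = (p : ℕ) + 1 ∧ (b : ℕ) = (q : ℕ) then 1 else 0)

/-- The matrix `A + ∑_{i,j} x_{ij} B^{ij}` where `A` is the `n × n` matrix with all
entries `1/n`. -/
def pertMatrix (n : ℕ) (x : Fin (n - 1) × Fin (n - 1) → ℝ) : Matrix (Fin n) (Fin n) ℝ :=
  fun a b => 1 / n + ∑ p : Fin (n - 1) × Fin (n - 1), x p * Bmat n p.1 p.2 a b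

/-- The function `h_{S,n}`: the sum over `π ∈ S` of the pattern density of `π` in the
step permuton of the perturbed matrix. -/
def hSN (n : ℕ) (S : Finset (Equiv.Perm (Fin 4))) (x : Fin (n - 1) × Fin (n - 1) → ℝ) : ℝ :=
  ∑ π ∈ S, PermutonDensity π (stepPermuton (pertMatrix n x))

open scoped Classical in
/-- The cover matrix of a set `S` of `4`-permutations: `C i j` is the number of `π ∈ S`
with `π j = i`. -/
def coverMatrix (S : Finset (Equiv.Perm (Fin 4))) : Fin 4 → Fin 4 → ℕ := fun i j =>
  (S.filter fun π => π j = i).card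

/-- The eight symmetry operations on `4`-permutations. -/
def symOps : List (Equiv.Perm (Fin 4) → Equiv.Perm (Fin 4)) :=
  [fun σ => σ,
   fun σ => σ * Fin.revPerm,
   fun σ => Fin.revPerm * σ,
   fun σ => Fin.revPerm * σ * Fin.revPerm,
   fun σ => σ⁻¹,
   fun σ => σ⁻¹ * Fin.revPerm,
   fun σ => Fin.revPerm * σ⁻¹,
   fun σ => Fin.revPerm * σ⁻¹ * Fin.revPerm]

open scoped Classical in
/-- `T` is symmetric to `S` if one of the eight symmetry operations maps `S` onto `T`. -/
def SymmetricSets (S T : Finset (Equiv.Perm (Fin 4))) : Prop :=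
  ∃ op ∈ symOps, T = S.image op

end

/-!
For any `3 × 3` matrix of total mass one, the polynomial of the hypothesis equals the central entry
minus the product of the middle row sum and the middle column sum. For the grid cut out of a
permuton by a pair of points it is therefore the discrepancy `μ(R) - |R|` of the rectangle `R`
spanned by the pair, so the hypothesis says `μ(R) = |R|` for almost every pair forming the pattern
`21`. Uniform marginals make `μ(R)` a continuous function of the two corners, and two continuous
functions which agree almost everywhere agree on the support of `μ ⊗ μ`, which contains all pairs
of points of `supp μ`.
-/

open Set Topology

section Support

variable {X Y Z : Type*} [TopologicalSpace X] [TopologicalSpace Y] [TopologicalSpace Z]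
  [MeasurableSpace X] [MeasurableSpace Y]

lemma mk_mem_support_prod {μ : Measure X} {ν : Measure Y} [SFinite ν] {x : X} {y : Y}
    (hx : x ∈ μ.support) (hy : y ∈ ν.support) : (x, y) ∈ (μ.prod ν).support := by
  rw [Measure.mem_support_iff_forall] at hx hy
  rw [((𝓝 x).basis_sets.prod_nhds (𝓝 y).basis_sets).mem_measureSupport]
  rintro ⟨U, V⟩ ⟨hU, hV⟩
  simpa only [id, Measure.prod_prod] using ENNReal.mul_pos (hx U hU).ne' (hy V hV).ne'

lemma eqOn_support_of_ae_eq [T2Space Z] {μ : Measure X} {f g : X → Z} (hf : Continuous f)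
    (hg : Continuous g) (hfg : f =ᵐ[μ] g) : EqOn f g μ.support :=
  Measure.support_subset_of_isClosed (isClosed_eq hf hg) hfg

end Support

lemma measSupport_eq_support (μ : Measure (ℝ × ℝ)) : measSupport μ = μ.support := by
  rw [Measure.support_eq_forall_isOpen]
  exact Set.ext fun p ↦ forall_congr' fun U ↦ forall_comm

section Intervals

variable {α : Type*} [LinearOrder α] [TopologicalSpace α] [OrderClosedTopology α]

lemma eventually_mem_Icc_iff {a b x : α} (ha : x ≠ a) (hb : x ≠ b) :
    ∀ᶠ r in 𝓝 (a, b), x ∈ Icc r.1 r.2 ↔ x ∈ Icc a b := by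
  have hleft : ∀ᶠ a' in 𝓝 a, a' ≤ x ↔ a ≤ x := by
    rcases ha.lt_or_gt with h | h
    · filter_upwards [Ioi_mem_nhds h] with a' ha'
      exact iff_of_false (mem_Ioi.mp ha').not_ge h.not_ge
    · filter_upwards [Iio_mem_nhds h] with a' ha'
      exact iff_of_true (mem_Iio.mp ha').le h.le
  have hright : ∀ᶠ b' in 𝓝 b, x ≤ b' ↔ x ≤ b := by
    rcases hb.lt_or_gt with h | h
    · filter_upwards [Ioi_mem_nhds h] with b' hb'
      exact iff_of_true (mem_Ioi.mp hb').le h.le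
    · filter_upwards [Iio_mem_nhds h] with b' hb'
      exact iff_of_false (mem_Iio.mp hb').not_ge h.not_ge
  filter_upwards [hleft.prod_nhds hright] with r hr
  exact and_congr hr.1 hr.2

variable [MeasurableSpace α] [OpensMeasurableSpace α]

lemma sum_measureReal_Icc (ν : Measure α) [IsFiniteMeasure ν] [NullSingletonClass ν] {n : ℕ}
    {x : Fin (n + 1) → α} (hx : Monotone x) :
    ∑ i : Fin n, ν.real (Icc (x i.castSucc) (x i.succ)) =
      ν.real (Icc (x 0) (x (Fin.last n))) := by
  induction n with
  | zero => simp [measureReal_def]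
  | succ n ih =>
    have hinit := ih (x := fun i ↦ x i.castSucc) (hx.comp Fin.strictMono_castSucc.monotone)
    have h₀ : x 0 ≤ x (Fin.last n).castSucc := hx (Fin.zero_le _)
    have h₁ : x (Fin.last n).castSucc ≤ x (Fin.last (n + 1)) := hx (Fin.le_last _)
    have hdisj : AEDisjoint ν (Icc (x 0) (x (Fin.last n).castSucc))
        (Icc (x (Fin.last n).castSucc) (x (Fin.last (n + 1)))) := by
      rw [AEDisjoint, Icc_inter_Icc_eq_singleton h₀ h₁, measure_singleton]
    rw [Fin.sum_univ_castSucc, ← Icc_union_Icc_eq_Icc h₀ h₁,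
      measureReal_union₀ measurableSet_Icc.nullMeasurableSet hdisj]
    exact congrArg (· + _) hinit

lemma sum_measureReal_preimage_Icc_inter {Ω : Type*} [MeasurableSpace Ω] (μ : Measure Ω)
    [IsFiniteMeasure μ] {f : Ω → α} (hf : Measurable f) [NullSingletonClass (μ.map f)]
    (s : Set Ω) {n : ℕ} {x : Fin (n + 1) → α} (hx : Monotone x) :
    ∑ i : Fin n, μ.real (f ⁻¹' Icc (x i.castSucc) (x i.succ) ∩ s) =
      μ.real (f ⁻¹' Icc (x 0) (x (Fin.last n)) ∩ s) := by
  have hle : (μ.restrict s).map f ≤ μ.map f := Measure.map_mono Measure.restrict_le_self hf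
  have : NullSingletonClass ((μ.restrict s).map f) :=
    ⟨fun a ↦ hle.absolutelyContinuous (measure_singleton a)⟩
  simpa only [map_measureReal_apply hf measurableSet_Icc,
    measureReal_restrict_apply (hf measurableSet_Icc)]
    using sum_measureReal_Icc ((μ.restrict s).map f) hx

end Intervals

section Rectangles

variable {α β : Type*} [MeasurableSpace α] [MeasurableSpace β]

lemma measure_prod_eq_zero_of_subsingleton_left (μ : Measure (α × β))
    [NullSingletonClass μ.fst] {s : Set α} (hs : s.Subsingleton) (t : Set β) :
    μ (s ×ˢ t) = 0 :=
  measure_mono_null (prod_subset_preimage_fst s t) <|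
    nonpos_iff_eq_zero.mp <| (Measure.le_map_apply measurable_fst.aemeasurable s).trans_eq <|
      hs.measure_zero μ.fst

lemma measure_prod_eq_zero_of_subsingleton_right (μ : Measure (α × β))
    [NullSingletonClass μ.snd] (s : Set α) {t : Set β} (ht : t.Subsingleton) :
    μ (s ×ˢ t) = 0 :=
  measure_mono_null (prod_subset_preimage_snd s t) <|
    nonpos_iff_eq_zero.mp <| (Measure.le_map_apply measurable_snd.aemeasurable t).trans_eq <|
      ht.measure_zero μ.snd

lemma continuous_measureReal_Icc_prod_Icc [LinearOrder α] [TopologicalSpace α]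
    [OrderClosedTopology α] [FirstCountableTopology α] [OpensMeasurableSpace α]
    [LinearOrder β] [TopologicalSpace β] [OrderClosedTopology β] [FirstCountableTopology β]
    [OpensMeasurableSpace β] (μ : Measure (α × β)) [IsFiniteMeasure μ] [NullSingletonClass μ.fst]
    [NullSingletonClass μ.snd] :
    Continuous fun r : (α × α) × (β × β) ↦ μ.real (Icc r.1.1 r.1.2 ×ˢ Icc r.2.1 r.2.2) := by
  have hmeas (r : (α × α) × (β × β)) : MeasurableSet (Icc r.1.1 r.1.2 ×ˢ Icc r.2.1 r.2.2) :=
    measurableSet_Icc.prod measurableSet_Icc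
  have hfst (a : α) : ∀ᵐ z ∂μ, z.1 ≠ a :=
    ae_of_ae_map measurable_fst.aemeasurable (Measure.ae_ne μ.fst a)
  have hsnd (b : β) : ∀ᵐ z ∂μ, z.2 ≠ b :=
    ae_of_ae_map measurable_snd.aemeasurable (Measure.ae_ne μ.snd b)
  refine continuous_iff_continuousAt.mpr fun r ↦
    (ENNReal.continuousAt_toReal (measure_ne_top μ _)).tendsto.comp ?_
  refine tendsto_measure_of_ae_tendsto_indicator_of_isFiniteMeasure _ (hmeas r) hmeas ?_
  filter_upwards [hfst r.1.1, hfst r.1.2, hsnd r.2.1, hsnd r.2.2] with z h₁ h₂ h₃ h₄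
  filter_upwards [(eventually_mem_Icc_iff h₁ h₂).prod_nhds (eventually_mem_Icc_iff h₃ h₄)]
    with r' hr'
  exact and_congr hr'.1 hr'.2

lemma sum_measureReal_Icc_prod [LinearOrder α] [TopologicalSpace α] [OrderClosedTopology α]
    [OpensMeasurableSpace α] (μ : Measure (α × β)) [IsFiniteMeasure μ]
    [NullSingletonClass μ.fst] {n : ℕ} {x : Fin (n + 1) → α} (hx : Monotone x) (t : Set β) :
    ∑ i : Fin n, μ.real (Icc (x i.castSucc) (x i.succ) ×ˢ t) =
      μ.real (Icc (x 0) (x (Fin.last n)) ×ˢ t) :=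
  have : NullSingletonClass (μ.map Prod.fst) := ‹NullSingletonClass μ.fst›
  sum_measureReal_preimage_Icc_inter μ measurable_fst (Prod.snd ⁻¹' t) hx

lemma sum_measureReal_prod_Icc [LinearOrder β] [TopologicalSpace β] [OrderClosedTopology β]
    [OpensMeasurableSpace β] (μ : Measure (α × β)) [IsFiniteMeasure μ]
    [NullSingletonClass μ.snd] (s : Set α) {n : ℕ} {y : Fin (n + 1) → β} (hy : Monotone y) :
    ∑ j : Fin n, μ.real (s ×ˢ Icc (y j.castSucc) (y j.succ)) =
      μ.real (s ×ˢ Icc (y 0) (y (Fin.last n))) := by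
  have : NullSingletonClass (μ.map Prod.snd) := ‹NullSingletonClass μ.snd›
  simpa only [Set.prod_eq, inter_comm] using
    sum_measureReal_preimage_Icc_inter μ measurable_snd (Prod.fst ⁻¹' s) hy

/-- The masses of the cells of the grid with vertical lines `x 0, …, x m` and horizontal lines
`y 0, …, y n`; for `m = n = 3` these are the quantities `a_{ij}`, indexed from `0`. -/
noncomputable def cellMass [Preorder α] [Preorder β] (μ : Measure (α × β)) {m n : ℕ}
    (x : Fin (m + 1) → α) (y : Fin (n + 1) → β) : Matrix (Fin m) (Fin n) ℝ := fun i j ↦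
  μ.real (Icc (x i.castSucc) (x i.succ) ×ˢ Icc (y j.castSucc) (y j.succ))

end Rectangles

/-- The polynomial of the hypothesis: the value of the rooted combination `A₂` at a pair of roots,
in terms of the `3 × 3` matrix of masses of the cells cut out by the roots. -/
def rootedForm {R : Type*} [Ring R] (a : Matrix (Fin 3) (Fin 3) R) : R :=
  a 1 1 * (a 0 0 + a 0 2 + a 2 0 + a 2 2) - (a 1 0 + a 1 2) * (a 0 1 + a 2 1)

lemma rootedForm_eq_mul_sum_sub_mul {R : Type*} [CommRing R] (a : Matrix (Fin 3) (Fin 3) R) :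
    rootedForm a = a 1 1 * ∑ i, ∑ j, a i j - (∑ j, a 1 j) * ∑ i, a i 1 := by
  simp only [rootedForm, Fin.sum_univ_three]
  ring

namespace IsPermuton

variable {μ : Measure (ℝ × ℝ)}

lemma map_swap (hμ : IsPermuton μ) : IsPermuton (μ.map Prod.swap) := by
  have happly (s t : Set ℝ) : μ.map Prod.swap (s ×ˢ t) = μ (t ×ˢ s) := by
    rw [← preimage_swap_prod]
    exact MeasurableEquiv.prodComm.map_apply _
  obtain ⟨_, hfst, hsnd⟩ := hμ
  refine ⟨Measure.isProbabilityMeasure_map measurable_swap.aemeasurable, ?_, ?_⟩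
  · simpa only [happly] using hsnd
  · simpa only [happly] using hfst

lemma ae_mem_Icc_prod_Icc (hμ : IsPermuton μ) :
    ∀ᵐ z ∂μ, z ∈ Icc (0 : ℝ) 1 ×ˢ Icc (0 : ℝ) 1 := by
  have := hμ.1
  refine (mem_ae_iff_prob_eq_one (measurableSet_Icc.prod measurableSet_Icc)).mpr ?_
  simpa using hμ.2.1 0 1 le_rfl zero_le_one le_rfl

lemma fst_eq (hμ : IsPermuton μ) : μ.fst = volume.restrict (Icc 0 1) := by
  have := hμ.1
  refine Measure.ext_of_Icc _ _ fun a b _ ↦ ?_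
  have hclip : (Prod.fst ⁻¹' Icc a b : Set (ℝ × ℝ)) ∩ Icc 0 1 ×ˢ Icc 0 1 =
      Icc (a ⊔ 0) (b ⊓ 1) ×ˢ Icc 0 1 := by
    rw [← prod_univ, prod_inter_prod, univ_inter, Icc_inter_Icc]
  rw [Measure.fst_apply measurableSet_Icc, Measure.restrict_apply measurableSet_Icc,
    ← measure_inter_conull (t := Icc 0 1 ×ˢ Icc 0 1) hμ.ae_mem_Icc_prod_Icc, hclip,
    Icc_inter_Icc, Real.volume_Icc]
  rcases le_or_gt (a ⊔ 0) (b ⊓ 1) with h | h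
  · exact hμ.2.1 _ _ le_sup_right h inf_le_right
  · rw [Icc_eq_empty h.not_ge, empty_prod, measure_empty, ENNReal.ofReal_of_nonpos (by linarith)]

lemma snd_eq (hμ : IsPermuton μ) : μ.snd = volume.restrict (Icc 0 1) := by
  rw [← Measure.fst_map_swap, hμ.map_swap.fst_eq]

lemma nullSingletonClass_fst (hμ : IsPermuton μ) : NullSingletonClass μ.fst :=
  hμ.fst_eq ▸ inferInstance

lemma nullSingletonClass_snd (hμ : IsPermuton μ) : NullSingletonClass μ.snd :=
  hμ.snd_eq ▸ inferInstance

lemma measureReal_Icc_prod_unitInterval (hμ : IsPermuton μ) {a b : ℝ} (ha : 0 ≤ a)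
    (hab : a ≤ b) (hb : b ≤ 1) : μ.real (Icc a b ×ˢ Icc 0 1) = b - a := by
  rw [measureReal_def, hμ.2.1 a b ha hab hb, ENNReal.toReal_ofReal (sub_nonneg.mpr hab)]

lemma measureReal_unitInterval_prod_Icc (hμ : IsPermuton μ) {a b : ℝ} (ha : 0 ≤ a)
    (hab : a ≤ b) (hb : b ≤ 1) : μ.real (Icc 0 1 ×ˢ Icc a b) = b - a := by
  rw [measureReal_def, hμ.2.2 a b ha hab hb, ENNReal.toReal_ofReal (sub_nonneg.mpr hab)]

lemma rootedForm_cellMass (hμ : IsPermuton μ) {x x' y y' : ℝ} (hx : 0 ≤ x) (hxx' : x ≤ x')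
    (hx' : x' ≤ 1) (hy : 0 ≤ y) (hyy' : y ≤ y') (hy' : y' ≤ 1) :
    rootedForm (cellMass μ ![0, x, x', 1] ![0, y, y', 1]) =
      μ.real (Icc x x' ×ˢ Icc y y') - (x' - x) * (y' - y) := by
  have := hμ.1
  have := hμ.nullSingletonClass_fst
  have := hμ.nullSingletonClass_snd
  have hxs : Monotone ![0, x, x', 1] := by simp [hx, hxx', hx']
  have hys : Monotone ![0, y, y', 1] := by simp [hy, hyy', hy']
  have hrow (i : Fin 3) := sum_measureReal_prod_Icc μ
    (Icc (![0, x, x', 1] i.castSucc) (![0, x, x', 1] i.succ)) hys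
  have hcol (j : Fin 3) := sum_measureReal_Icc_prod μ hxs
    (Icc (![0, y, y', 1] j.castSucc) (![0, y, y', 1] j.succ))
  have hmiddleRow : ∑ j, cellMass μ ![0, x, x', 1] ![0, y, y', 1] 1 j = x' - x :=
    (hrow 1).trans (hμ.measureReal_Icc_prod_unitInterval hx hxx' hx')
  have hmiddleCol : ∑ i, cellMass μ ![0, x, x', 1] ![0, y, y', 1] i 1 = y' - y :=
    (hcol 1).trans (hμ.measureReal_unitInterval_prod_Icc hy hyy' hy')
  have htotal : ∑ i, ∑ j, cellMass μ ![0, x, x', 1] ![0, y, y', 1] i j = 1 := by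
    refine (Finset.sum_congr rfl fun i _ ↦ hrow i).trans ?_
    refine (sum_measureReal_Icc_prod μ hxs _).trans ?_
    exact (hμ.measureReal_Icc_prod_unitInterval le_rfl zero_le_one le_rfl).trans (sub_zero 1)
  rw [rootedForm_eq_mul_sum_sub_mul, hmiddleRow, hmiddleCol, htotal, mul_one]
  rfl

/-- The positive parts cover the pairs that do not form the pattern `21`, so that no restriction to
an open set is needed before passing to the support. -/
lemma ae_measureReal_eq (hμ : IsPermuton μ)
    (h : ∀ᵐ z ∂μ.prod μ, z.1.1 < z.2.1 → z.2.2 < z.1.2 →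
      rootedForm (cellMass μ ![0, z.1.1, z.2.1, 1] ![0, z.2.2, z.1.2, 1]) = 0) :
    ∀ᵐ z ∂μ.prod μ, μ.real (Icc z.1.1 z.2.1 ×ˢ Icc z.2.2 z.1.2) =
      (z.2.1 - z.1.1)⁺ * (z.1.2 - z.2.2)⁺ := by
  have := hμ.1
  have := hμ.nullSingletonClass_fst
  have := hμ.nullSingletonClass_snd
  filter_upwards [h, Measure.quasiMeasurePreserving_fst.ae hμ.ae_mem_Icc_prod_Icc,
    Measure.quasiMeasurePreserving_snd.ae hμ.ae_mem_Icc_prod_Icc]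
    with ⟨p, q⟩ hzero ⟨hp₁, hp₂⟩ ⟨hq₁, hq₂⟩
  rcases le_or_gt q.1 p.1 with hx | hx
  · rw [posPart_of_nonpos (sub_nonpos.mpr hx), zero_mul, measureReal_def,
      measure_prod_eq_zero_of_subsingleton_left μ (subsingleton_Icc_of_ge hx), ENNReal.toReal_zero]
  rcases le_or_gt p.2 q.2 with hy | hy
  · rw [posPart_of_nonpos (sub_nonpos.mpr hy), mul_zero, measureReal_def,
      measure_prod_eq_zero_of_subsingleton_right μ _ (subsingleton_Icc_of_ge hy),
      ENNReal.toReal_zero]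
  rw [posPart_of_nonneg (sub_nonneg.mpr hx.le), posPart_of_nonneg (sub_nonneg.mpr hy.le),
    ← sub_eq_zero, ← hμ.rootedForm_cellMass hp₁.1 hx.le hq₁.2 hq₂.1 hy.le hp₂.2]
  exact hzero hx hy

end IsPermuton

theorem statement_6 (μ : Measure (ℝ × ℝ)) (hμ : IsPermuton μ)
    (h : ∀ᵐ pq ∂(μ.prod μ), pq.1.1 < pq.2.1 → pq.2.2 < pq.1.2 →
      ∀ a : Fin 3 → Fin 3 → ℝ,
        (∀ i j : Fin 3, a i j =
          (μ (Set.Icc (![0, pq.1.1, pq.2.1, 1] i.castSucc) (![0, pq.1.1, pq.2.1, 1] i.succ) ×ˢ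
              Set.Icc (![0, pq.2.2, pq.1.2, 1] j.castSucc)
                (![0, pq.2.2, pq.1.2, 1] j.succ))).toReal) →
        a 1 1 * (a 0 0 + a 0 2 + a 2 0 + a 2 2) -
          (a 1 0 + a 1 2) * (a 0 1 + a 2 1) = 0) :
    ∀ p ∈ measSupport μ, ∀ q ∈ measSupport μ, p.1 ≤ q.1 → q.2 ≤ p.2 →
      μ (Set.Icc p.1 q.1 ×ˢ Set.Icc q.2 p.2) =
        ENNReal.ofReal ((q.1 - p.1) * (p.2 - q.2)) := by
  have := hμ.1
  have := hμ.nullSingletonClass_fst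
  have := hμ.nullSingletonClass_snd
  simp only [measSupport_eq_support]
  intro p hp q hq hpq hqp
  have hae := hμ.ae_measureReal_eq (h.mono fun _ hz hx hy ↦ hz hx hy _ fun _ _ ↦ rfl)
  have hmass : Continuous fun z : (ℝ × ℝ) × ℝ × ℝ ↦
      μ.real (Icc z.1.1 z.2.1 ×ˢ Icc z.2.2 z.1.2) :=
    (continuous_measureReal_Icc_prod_Icc μ).comp
      (f := fun z : (ℝ × ℝ) × ℝ × ℝ ↦ ((z.1.1, z.2.1), (z.2.2, z.1.2))) (by fun_prop)
  have harea : Continuous fun z : (ℝ × ℝ) × ℝ × ℝ ↦ (z.2.1 - z.1.1)⁺ * (z.1.2 - z.2.2)⁺ := by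
    fun_prop
  have heq := eqOn_support_of_ae_eq hmass harea hae (mk_mem_support_prod hp hq)
  dsimp only at heq
  rw [← ofReal_measureReal, heq, posPart_of_nonneg (sub_nonneg.mpr hpq),
    posPart_of_nonneg (sub_nonneg.mpr hqp)]
end

section
/- Let S = {1234, 1243, 2134, 2143, 3412, 3421, 4312, 4321}. For every permuton μ it holds that Σ_{π∈S} d(π,μ) ≥ 1/3, and equality holds if and only if μ is the uniform permuton. -/
open MeasureTheory Filter

/-!
Let `F` be the distribution function of `μ`, let `A` and `B` be those of its marginals `μ₁` and
`μ₂`, and put `H z = F z - A z.1 * B z.2`. There is an integer-valued function of four points whose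
sum over the orderings of the points is `24` times the indicator of the eight patterns; its
expectation expresses the sum of the densities as
`12 ∫ F² dμ - 24 ∫ F A B dμ + 24 ∫ F² d(μ₁ ⊗ μ₂) - 1`.
As the marginals have no atoms, `∫_{x ≥ t} A dμ₁ = (1 - A t ^ 2) / 2`, so Fubini evaluates
`∫ F A B d(μ₁ ⊗ μ₂)` in terms of `∫ (A B)² dμ`, and completing the squares gives
`1 / 3 + 12 ∫ H² dμ + 24 ∫ H² d(μ₁ ⊗ μ₂)`.
Equality forces `H = 0` almost everywhere for `μ₁ ⊗ μ₂`, hence everywhere, because the increments of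
`F` are bounded by those of `A` and `B`; then the coordinates are independent.
-/

open Set

section DistributionFunction

theorem integrable_of_mem_unitInterval {Ω : Type*} [MeasurableSpace Ω] {ρ : Measure Ω}
    [IsFiniteMeasure ρ] {f : Ω → ℝ} (hf : Measurable f) (h : ∀ z, f z ∈ unitInterval) :
    Integrable f ρ :=
  .of_bound hf.aestronglyMeasurable 1 <| .of_forall fun z => by
    rw [Real.norm_of_nonneg (h z).1]; exact (h z).2

variable {Ω : Type*} [MeasurableSpace Ω]

theorem measurable_measureReal_prodMk_left {Ω' : Type*} [MeasurableSpace Ω'] {μ : Measure Ω'}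
    [SFinite μ] {s : Set (Ω × Ω')} (hs : MeasurableSet s) :
    Measurable fun z => μ.real (Prod.mk z ⁻¹' s) :=
  (measurable_measure_prodMk_left hs).ennreal_toReal

theorem measureReal_mem_unitInterval {μ : Measure Ω} [IsProbabilityMeasure μ] (s : Set Ω) :
    μ.real s ∈ unitInterval :=
  ⟨measureReal_nonneg, measureReal_le_one⟩

theorem measureReal_prod_eq_integral {Ω' : Type*} [MeasurableSpace Ω'] (μ : Measure Ω)
    (ν : Measure Ω') [IsFiniteMeasure μ] [IsFiniteMeasure ν] {s : Set (Ω × Ω')}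
    (hs : MeasurableSet s) :
    (μ.prod ν).real s = ∫ x, ν.real (Prod.mk x ⁻¹' s) ∂μ := by
  simp only [measureReal_def]
  rw [integral_toReal (measurable_measure_prodMk_left hs).aemeasurable
    (.of_forall fun _ => measure_lt_top ..), Measure.prod_apply hs]

section Preorder

variable [Preorder Ω] (hΩ : MeasurableSet {p : Ω × Ω | p.1 ≤ p.2})

include hΩ

theorem measurable_measureReal_Iic (μ : Measure Ω) [SFinite μ] :
    Measurable fun z => μ.real (Iic z) :=
  measurable_measureReal_prodMk_left (measurable_swap hΩ)

theorem integrable_measureReal_Iic (μ ρ : Measure Ω) [IsProbabilityMeasure μ]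
    [IsFiniteMeasure ρ] : Integrable (fun z => μ.real (Iic z)) ρ :=
  integrable_of_mem_unitInterval (measurable_measureReal_Iic hΩ μ)
    fun _ => measureReal_mem_unitInterval _

theorem integrable_measureReal_Iic_mul (μ ν ρ : Measure Ω) [IsProbabilityMeasure μ]
    [IsProbabilityMeasure ν] [IsFiniteMeasure ρ] :
    Integrable (fun z => μ.real (Iic z) * ν.real (Iic z)) ρ :=
  integrable_of_mem_unitInterval
    ((measurable_measureReal_Iic hΩ μ).mul (measurable_measureReal_Iic hΩ ν))
    fun _ => unitInterval.mul_mem (measureReal_mem_unitInterval _) (measureReal_mem_unitInterval _)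

theorem integral_measureReal_Iic_mul (μ ρ : Measure Ω) [IsFiniteMeasure μ] [IsFiniteMeasure ρ]
    {f : Ω → ℝ} (hf : Integrable f ρ) :
    ∫ z, μ.real (Iic z) * f z ∂ρ = ∫ q, (∫ z in Ici q, f z ∂ρ) ∂μ := by
  have hIic (z : Ω) : MeasurableSet (Iic z) := measurable_prodMk_right hΩ
  have hIci (q : Ω) : MeasurableSet (Ici q) := measurable_prodMk_left hΩ
  have hint : Integrable (Function.uncurry fun q z => (Ici q).indicator f z) (μ.prod ρ) :=
    (hf.comp_snd μ).indicator hΩ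
  calc ∫ z, μ.real (Iic z) * f z ∂ρ = ∫ z, (∫ q, (Ici q).indicator f z ∂μ) ∂ρ := by
        congr! 2 with z
        rw [← smul_eq_mul, ← setIntegral_const, ← integral_indicator (hIic z)]
        rfl
    _ = ∫ q, (∫ z, (Ici q).indicator f z ∂ρ) ∂μ := (integral_integral_swap hint).symm
    _ = ∫ q, (∫ z in Ici q, f z ∂ρ) ∂μ := by simp only [integral_indicator (hIci _)]

end Preorder

end DistributionFunction

section LinearOrder

theorem ae_ne_prod {Ω : Type*} [MeasurableSpace Ω] [MeasurableEq Ω] (μ ν : Measure Ω)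
    [SFinite ν] [NullSingletonClass ν] : ∀ᵐ p ∂μ.prod ν, p.1 ≠ p.2 := by
  have hs : MeasurableSet {p : Ω × Ω | p.1 ≠ p.2} :=
    (measurableSet_eq_fun measurable_fst measurable_snd).compl
  rw [Measure.ae_prod_iff_ae_ae hs]
  exact .of_forall fun x => (Measure.ae_ne ν x).mono fun _ => Ne.symm

variable {R : Type*} [LinearOrder R] [TopologicalSpace R] [OrderClosedTopology R]
  [SecondCountableTopology R] [MeasurableSpace R] [OpensMeasurableSpace R]
  (ρ : Measure R) [IsProbabilityMeasure ρ] [NullSingletonClass ρ]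

theorem setIntegral_Ici_measureReal_Iic (t : R) :
    ∫ x in Ici t, ρ.real (Iic x) ∂ρ = (1 - ρ.real (Iic t) ^ 2) / 2 := by
  let P : Set (R × R) := {p | t ≤ p.1 ∧ p.2 ≤ p.1}
  have hP : MeasurableSet P :=
    (measurableSet_le measurable_const measurable_fst).inter
      (measurableSet_le measurable_snd measurable_fst)
  have hint : ∫ x in Ici t, ρ.real (Iic x) ∂ρ = (ρ.prod ρ).real P := by
    rw [← integral_indicator measurableSet_Ici, measureReal_prod_eq_integral ρ ρ hP]
    congr! 2 with x
    by_cases hx : t ≤ x <;> simp [P, hx, Iic_def]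
  have hswap : (ρ.prod ρ).real (Prod.swap ⁻¹' P) = (ρ.prod ρ).real P :=
    (Measure.measurePreserving_swap (μ := ρ) (ν := ρ)).measureReal_preimage hP.nullMeasurableSet
  have hinter : (ρ.prod ρ).real (P ∩ Prod.swap ⁻¹' P) = 0 := by
    rw [measureReal_eq_zero_iff]
    exact measure_mono_null (fun p hp => not_not.2 (le_antisymm hp.2.2 hp.1.2)) (ae_ne_prod ρ ρ)
  have hunion : (ρ.prod ρ).real (P ∪ Prod.swap ⁻¹' P) = 1 - ρ.real (Iic t) ^ 2 := by
    have hcompl : P ∪ Prod.swap ⁻¹' P = (Iio t ×ˢ Iio t)ᶜ := by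
      ext ⟨x, y⟩
      simp only [P, mem_union, mem_ofPred_eq, mem_preimage, Prod.swap, mem_compl_iff, mem_prod,
        mem_Iio]
      grind
    rw [hcompl, probReal_compl_eq_one_sub (measurableSet_Iio.prod measurableSet_Iio),
      measureReal_prod_prod, measureReal_congr Iio_ae_eq_Iic, sq]
  linarith [measureReal_union_add_inter (μ := ρ.prod ρ) (s := P) (measurable_swap hP)]

theorem integral_measureReal_Iic_sq : ∫ t, ρ.real (Iic t) ^ 2 ∂ρ = 1 / 3 := by
  have hint_sq : Integrable (fun t => ρ.real (Iic t) ^ 2) ρ := by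
    simpa only [sq] using integrable_measureReal_Iic_mul measurableSet_le' ρ ρ ρ
  have h := integral_measureReal_Iic_mul measurableSet_le' ρ ρ
    (integrable_measureReal_Iic measurableSet_le' ρ ρ)
  simp only [setIntegral_Ici_measureReal_Iic, integral_div, ← sq] at h
  rw [integral_sub (integrable_const 1) hint_sq, integral_const, probReal_univ, one_smul] at h
  linarith

section Composition

variable {Ω : Type*} [MeasurableSpace Ω] (μ : Measure Ω) [IsProbabilityMeasure μ] {f : Ω → R}
  (hf : Measurable f)

include hf

theorem integrable_measureReal_Iic_comp_sq :
    Integrable (fun q => (μ.map f).real (Iic (f q)) ^ 2) μ := by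
  have := Measure.isProbabilityMeasure_map (μ := μ) hf.aemeasurable
  simpa only [sq, Function.comp_def] using
    (integrable_measureReal_Iic_mul measurableSet_le' (μ.map f) (μ.map f) (μ.map f)).comp_measurable
      hf

theorem integral_measureReal_Iic_comp_sq [NullSingletonClass (μ.map f)] :
    ∫ q, (μ.map f).real (Iic (f q)) ^ 2 ∂μ = 1 / 3 := by
  have := Measure.isProbabilityMeasure_map (μ := μ) hf.aemeasurable
  rw [← integral_measureReal_Iic_sq (μ.map f), integral_map hf.aemeasurable]
  exact ((measurable_measureReal_Iic measurableSet_le' _).pow_const 2).aestronglyMeasurable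

end Composition

end LinearOrder

section Independence

theorem measureReal_prod_Iic {R S : Type*} [Preorder R] [Preorder S] [MeasurableSpace R]
    [MeasurableSpace S] (α : Measure R) (β : Measure S) [SFinite β] (z : R × S) :
    (α.prod β).real (Iic z) = α.real (Iic z.1) * β.real (Iic z.2) := by
  rw [← measureReal_prod_prod, Iic_prod_eq]

/-- The amount by which the joint distribution function of `μ` exceeds the product of its marginal
distribution functions; it vanishes identically when the two coordinates are independent. -/
noncomputable def independenceDefect {R S : Type*} [Preorder R] [Preorder S] [MeasurableSpace R]
    [MeasurableSpace S] (μ : Measure (R × S)) (z : R × S) : ℝ :=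
  μ.real (Iic z) - (μ.fst.prod μ.snd).real (Iic z)

variable {R S : Type*} [LinearOrder R] [TopologicalSpace R] [OrderClosedTopology R]
  [SecondCountableTopology R] [MeasurableSpace R] [OpensMeasurableSpace R] [LinearOrder S]
  [TopologicalSpace S] [OrderClosedTopology S] [SecondCountableTopology S] [MeasurableSpace S]
  [OpensMeasurableSpace S]

theorem setIntegral_Ici_measureReal_prod_Iic (α : Measure R) (β : Measure S)
    [IsProbabilityMeasure α] [IsProbabilityMeasure β] [NullSingletonClass α]
    [NullSingletonClass β] (q : R × S) :
    ∫ z in Ici q, (α.prod β).real (Iic z) ∂α.prod β =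
      (1 - α.real (Iic q.1) ^ 2) / 2 * ((1 - β.real (Iic q.2) ^ 2) / 2) := by
  simp only [measureReal_prod_Iic]
  rw [Ici_prod_eq, setIntegral_prod_mul (fun x => α.real (Iic x)) (fun y => β.real (Iic y)),
    setIntegral_Ici_measureReal_Iic, setIntegral_Ici_measureReal_Iic]

variable (μ : Measure (R × S)) [IsProbabilityMeasure μ]

theorem integrable_independenceDefect_sq (ρ : Measure (R × S)) [IsFiniteMeasure ρ] :
    Integrable (fun z => independenceDefect μ z ^ 2) ρ := by
  have hmeas : Measurable (independenceDefect μ) :=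
    (measurable_measureReal_Iic measurableSet_le' μ).sub
      (measurable_measureReal_Iic measurableSet_le' _)
  refine integrable_of_mem_unitInterval (hmeas.pow_const 2) fun z => ⟨sq_nonneg _, ?_⟩
  have hμ := measureReal_mem_unitInterval (μ := μ) (Iic z)
  have hprod := measureReal_mem_unitInterval (μ := μ.fst.prod μ.snd) (Iic z)
  rw [sq_le_one_iff_abs_le_one, abs_le, independenceDefect]
  constructor <;> linarith [hμ.1, hμ.2, hprod.1, hprod.2]

theorem integral_independenceDefect_sq (ρ : Measure (R × S)) [IsProbabilityMeasure ρ] :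
    ∫ z, independenceDefect μ z ^ 2 ∂ρ =
      (∫ z, μ.real (Iic z) * μ.real (Iic z) ∂ρ)
        - 2 * (∫ z, μ.real (Iic z) * (μ.fst.prod μ.snd).real (Iic z) ∂ρ)
        + ∫ z, (μ.fst.prod μ.snd).real (Iic z) * (μ.fst.prod μ.snd).real (Iic z) ∂ρ := by
  let ν := μ.fst.prod μ.snd
  calc ∫ z, independenceDefect μ z ^ 2 ∂ρ
    _ = ∫ z, (μ.real (Iic z) * μ.real (Iic z) - 2 * (μ.real (Iic z) * ν.real (Iic z)))
          + ν.real (Iic z) * ν.real (Iic z) ∂ρ := by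
      congr with z; simp only [independenceDefect, ν]; ring
    _ = _ := by
      have hμμ := integrable_measureReal_Iic_mul measurableSet_le' μ μ ρ
      have hμν := (integrable_measureReal_Iic_mul measurableSet_le' μ ν ρ).const_mul 2
      have hsub : Integrable (fun z => μ.real (Iic z) * μ.real (Iic z)
          - 2 * (μ.real (Iic z) * ν.real (Iic z))) ρ := hμμ.sub hμν
      rw [integral_add hsub (integrable_measureReal_Iic_mul measurableSet_le' ν ν ρ),
        integral_sub hμμ hμν, integral_const_mul]

variable [NullSingletonClass μ.fst] [NullSingletonClass μ.snd]

theorem integral_measureReal_Iic_mul_prod :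
    ∫ z, μ.real (Iic z) * (μ.fst.prod μ.snd).real (Iic z) ∂μ.fst.prod μ.snd =
      (1 / 3 + ∫ z, (μ.fst.prod μ.snd).real (Iic z) * (μ.fst.prod μ.snd).real (Iic z) ∂μ) / 4 := by
  let V (z : R × S) := (μ.fst.prod μ.snd).real (Iic z)
  have hV : Integrable V (μ.fst.prod μ.snd) := integrable_measureReal_Iic measurableSet_le' _ _
  have hVV : Integrable (fun q => V q * V q) μ :=
    integrable_measureReal_Iic_mul measurableSet_le' ..
  have hA : Integrable (fun q => μ.fst.real (Iic q.1) ^ 2) μ :=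
    integrable_measureReal_Iic_comp_sq μ measurable_fst
  have hB : Integrable (fun q => μ.snd.real (Iic q.2) ^ 2) μ :=
    integrable_measureReal_Iic_comp_sq μ measurable_snd
  have : NullSingletonClass (μ.map Prod.fst) := ‹NullSingletonClass μ.fst›
  have : NullSingletonClass (μ.map Prod.snd) := ‹NullSingletonClass μ.snd›
  have hA_int : ∫ q, μ.fst.real (Iic q.1) ^ 2 ∂μ = 1 / 3 :=
    integral_measureReal_Iic_comp_sq μ measurable_fst
  have hB_int : ∫ q, μ.snd.real (Iic q.2) ^ 2 ∂μ = 1 / 3 :=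
    integral_measureReal_Iic_comp_sq μ measurable_snd
  have h1A : Integrable (fun q => 1 - μ.fst.real (Iic q.1) ^ 2) μ := (integrable_const 1).sub hA
  have h1AB : Integrable (fun q => 1 - μ.fst.real (Iic q.1) ^ 2 - μ.snd.real (Iic q.2) ^ 2) μ :=
    h1A.sub hB
  calc ∫ z, μ.real (Iic z) * V z ∂μ.fst.prod μ.snd
    _ = ∫ q, (∫ z in Ici q, V z ∂μ.fst.prod μ.snd) ∂μ :=
      integral_measureReal_Iic_mul measurableSet_le' _ _ hV
    _ = ∫ q, (1 - μ.fst.real (Iic q.1) ^ 2 - μ.snd.real (Iic q.2) ^ 2 + V q * V q) / 4 ∂μ := by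
      congr with q
      simp only [V, setIntegral_Ici_measureReal_prod_Iic]
      rw [measureReal_prod_Iic]
      ring
    _ = (1 / 3 + ∫ q, V q * V q ∂μ) / 4 := by
      rw [integral_div, integral_add h1AB hVV, integral_sub h1A hB,
        integral_sub (integrable_const 1) hA, integral_const, probReal_univ, one_smul, hA_int,
        hB_int]
      norm_num

theorem integral_measureReal_prod_Iic_mul_self (α : Measure R) (β : Measure S)
    [IsProbabilityMeasure α] [IsProbabilityMeasure β] [NullSingletonClass α]
    [NullSingletonClass β] :
    ∫ z, (α.prod β).real (Iic z) * (α.prod β).real (Iic z) ∂α.prod β = 1 / 9 := by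
  have : NullSingletonClass (α.prod β).fst := by rwa [Measure.fst_prod]
  have : NullSingletonClass (α.prod β).snd := by rwa [Measure.snd_prod]
  have h := integral_measureReal_Iic_mul_prod (α.prod β)
  rw [Measure.fst_prod, Measure.snd_prod] at h
  linarith

end Independence

section Sampling

open ProbabilityTheory

variable {ι Ω : Type*} [Fintype ι] [MeasurableSpace Ω] (μ : Measure Ω) [IsProbabilityMeasure μ]

theorem iIndepFun_eval : iIndepFun (fun (i : ι) (p : ι → Ω) => p i) (Measure.pi fun _ => μ) :=
  iIndepFun_pi (X := fun _ => id) fun _ => aemeasurable_id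

theorem map_pi_pair {i j : ι} (hij : i ≠ j) :
    (Measure.pi fun _ => μ).map (fun p => (p i, p j)) = μ.prod μ := by
  rw [((iIndepFun_eval μ).indepFun hij).map_prod_eq_prod_map_map
    (measurable_pi_apply i).aemeasurable (measurable_pi_apply j).aemeasurable]
  exact congrArg₂ Measure.prod (measurePreserving_eval _ i).map_eq
    (measurePreserving_eval _ j).map_eq

theorem measurePreserving_pi_pairs {i j k l : ι} (hij : i ≠ j) (hkl : k ≠ l) (hik : i ≠ k)
    (hil : i ≠ l) (hjk : j ≠ k) (hjl : j ≠ l) :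
    MeasurePreserving (fun p : ι → Ω => ((p i, p j), (p k, p l))) (Measure.pi fun _ => μ)
      ((μ.prod μ).prod (μ.prod μ)) := by
  refine ⟨by fun_prop, ?_⟩
  have hind := (iIndepFun_eval μ).indepFun_prodMk_prodMk measurable_pi_apply i j k l hik hil hjk hjl
  rw [hind.map_prod_eq_prod_map_map (by fun_prop) (by fun_prop), map_pi_pair μ hij,
    map_pi_pair μ hkl]

theorem ae_injective_comp_pi {R : Type*} [MeasurableSpace R] [MeasurableEq R] {f : Ω → R}
    (hf : Measurable f) [NullSingletonClass (μ.map f)] :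
    ∀ᵐ p ∂Measure.pi fun _ : ι => μ, Function.Injective fun i => f (p i) := by
  have hpair (i j : ι) (hij : i ≠ j) : ∀ᵐ p ∂Measure.pi fun _ : ι => μ, f (p i) ≠ f (p j) := by
    have hne := ae_ne_prod (μ.map f) (μ.map f)
    rw [Measure.map_prod_map _ _ hf hf, ← map_pi_pair μ hij] at hne
    exact ae_of_ae_map (f := fun p : ι → Ω => (p i, p j)) (by fun_prop)
      (ae_of_ae_map (hf.prodMap hf).aemeasurable hne)
  have hall : ∀ᵐ p ∂Measure.pi fun _ : ι => μ, ∀ i j, i ≠ j → f (p i) ≠ f (p j) := by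
    simpa only [ae_all_iff] using hpair
  exact hall.mono fun p hp i j => not_imp_not.1 (hp i j)

theorem measurePreserving_pi_comp_perm (σ : Equiv.Perm ι) :
    MeasurePreserving (fun p : ι → Ω => p ∘ σ) (Measure.pi fun _ => μ) (Measure.pi fun _ => μ) :=
  measurePreserving_arrowCongr' (fun _ => μ) (fun _ => μ) σ.symm (.refl Ω) fun _ => .id μ

theorem measureReal_pi_fin_four {D : Set (Ω × Ω)} {S T : Set ((Ω × Ω) × Ω)} (hD : MeasurableSet D)
    (hS : MeasurableSet S) (hT : MeasurableSet T) :
    (Measure.pi fun _ : Fin 4 => μ).real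
        {p | (p 0, p 1) ∈ D ∧ ((p 0, p 1), p 2) ∈ S ∧ ((p 0, p 1), p 3) ∈ T} =
      ∫ w in D, μ.real (Prod.mk w ⁻¹' S) * μ.real (Prod.mk w ⁻¹' T) ∂μ.prod μ := by
  let E : Set ((Ω × Ω) × (Ω × Ω)) := {q | q.1 ∈ D ∧ (q.1, q.2.1) ∈ S ∧ (q.1, q.2.2) ∈ T}
  have hE : MeasurableSet E :=
    (measurable_fst hD).inter <|
      (measurable_fst.prodMk (measurable_fst.comp measurable_snd) hS).inter <|
        measurable_fst.prodMk (measurable_snd.comp measurable_snd) hT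
  have hpairs := measurePreserving_pi_pairs μ (i := (0 : Fin 4)) (j := 1) (k := 2) (l := 3)
    (by decide) (by decide) (by decide) (by decide) (by decide) (by decide)
  calc _ = ((μ.prod μ).prod (μ.prod μ)).real E :=
        hpairs.measureReal_preimage hE.nullMeasurableSet
    _ = ∫ w, (μ.prod μ).real (Prod.mk w ⁻¹' E) ∂μ.prod μ := measureReal_prod_eq_integral _ _ hE
    _ = _ := by
      rw [← integral_indicator hD]
      congr with w
      by_cases hw : w ∈ D
      · rw [indicator_of_mem hw, ← measureReal_prod_prod]
        congr 1; ext q; simp [E, hw]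
      · simp [E, hw]

theorem setIntegral_prod_comp_fst {Ω' : Type*} [MeasurableSpace Ω'] {ν : Measure Ω'}
    [IsFiniteMeasure ν] {D : Set (Ω × Ω')} (hD : MeasurableSet D) {f : Ω → ℝ}
    (hf : Integrable f μ) :
    ∫ w in D, f w.1 ∂μ.prod ν = ∫ z, ν.real (Prod.mk z ⁻¹' D) * f z ∂μ := by
  rw [← integral_indicator hD, integral_prod _ ((hf.comp_fst ν).indicator hD)]
  congr with z
  rw [← smul_eq_mul, ← setIntegral_const, ← integral_indicator (measurable_prodMk_left hD)]
  rfl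

end Sampling

section Patterns

variable {k : ℕ}

/-- The event that the `k` points `p` are arranged in the pattern `π`; its probability under
independent sampling from `μ` is `PermutonDensity π μ`. -/
def patternEvent {R S : Type*} [Preorder R] [Preorder S] (π : Equiv.Perm (Fin k)) :
    Set (Fin k → R × S) :=
  {p | ∃ σ : Equiv.Perm (Fin k), StrictMono (fun i => (p (σ i)).1) ∧
    ∀ i j : Fin k, (p (σ i)).2 < (p (σ j)).2 ↔ π i < π j}

theorem exists_perm_strictMono {n : ℕ} {R : Type*} [LinearOrder R] {x : Fin n → R}
    (hx : Function.Injective x) : ∃ σ : Equiv.Perm (Fin n), StrictMono fun i => x (σ i) :=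
  ⟨Tuple.sort x, (Tuple.monotone_sort x).strictMono_of_injective
    (hx.comp (Tuple.sort x).injective)⟩

theorem perm_eq_of_strictMono {n : ℕ} {R : Type*} [LinearOrder R] {x : Fin n → R}
    {σ τ : Equiv.Perm (Fin n)} (hσ : StrictMono fun i => x (σ i))
    (hτ : StrictMono fun i => x (τ i)) : σ = τ := by
  have hx : Function.Injective x := (σ.injective_comp x).1 hσ.injective
  have hrange : range (fun i => x (σ i)) = range fun i => x (τ i) := by
    rw [range_comp' x σ, range_comp' x τ, σ.range_eq_univ, τ.range_eq_univ]
  ext1 i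
  exact hx (congrFun ((hσ.range_inj hτ).1 hrange) i)

theorem exists_mem_patternEvent {R S : Type*} [LinearOrder R] [LinearOrder S]
    {p : Fin k → R × S} (hx : Function.Injective fun i => (p i).1)
    (hy : Function.Injective fun i => (p i).2) :
    ∃ π, p ∈ patternEvent π := by
  obtain ⟨σ, hσ⟩ := exists_perm_strictMono hx
  obtain ⟨ρ, hρ⟩ := exists_perm_strictMono hy
  refine ⟨σ.trans ρ.symm, σ, hσ, fun i j => ?_⟩
  simpa using hρ.lt_iff_lt (a := ρ.symm (σ i)) (b := ρ.symm (σ j))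

theorem eq_of_mem_patternEvent {R S : Type*} [LinearOrder R] [Preorder S]
    {p : Fin k → R × S} {π τ : Equiv.Perm (Fin k)}
    (hπ : p ∈ patternEvent π) (hτ : p ∈ patternEvent τ) : π = τ := by
  obtain ⟨σ, hσ, hπσ⟩ := hπ
  obtain ⟨σ', hσ', hτσ⟩ := hτ
  obtain rfl := perm_eq_of_strictMono (x := fun i => (p i).1) hσ hσ'
  have hmono : StrictMono fun i => π (τ.symm i) := fun i j hij => by
    rw [← hπσ, hτσ]; simpa using hij
  have h := perm_eq_of_strictMono (x := π) (σ := τ.symm) (τ := π.symm) hmono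
    (fun i j hij => by simpa using hij)
  simpa using (congrArg Equiv.symm h).symm

section Measurability

variable {R S : Type*} [LinearOrder R] [TopologicalSpace R] [OrderClosedTopology R]
  [SecondCountableTopology R] [MeasurableSpace R] [OpensMeasurableSpace R] [LinearOrder S]
  [TopologicalSpace S] [OrderClosedTopology S] [SecondCountableTopology S] [MeasurableSpace S]
  [OpensMeasurableSpace S]

theorem measurableSet_patternEvent (π : Equiv.Perm (Fin k)) :
    MeasurableSet (patternEvent π : Set (Fin k → R × S)) := by
  simp only [patternEvent, StrictMono]
  measurability

theorem ae_exists_mem_patternEvent (μ : Measure (R × S)) [IsProbabilityMeasure μ]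
    [NullSingletonClass μ.fst] [NullSingletonClass μ.snd] :
    ∀ᵐ p ∂Measure.pi fun _ : Fin k => μ, ∃ π, p ∈ patternEvent π := by
  have : NullSingletonClass (μ.map Prod.fst) := ‹NullSingletonClass μ.fst›
  have : NullSingletonClass (μ.map Prod.snd) := ‹NullSingletonClass μ.snd›
  filter_upwards [ae_injective_comp_pi μ measurable_fst, ae_injective_comp_pi μ measurable_snd]
    with p hx hy using exists_mem_patternEvent hx hy

end Measurability

theorem factorial_mul_integral_eq_sum_permutonDensity {μ : Measure (ℝ × ℝ)}
    [IsProbabilityMeasure μ] [NullSingletonClass μ.fst] [NullSingletonClass μ.snd]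
    {g : (Fin k → ℝ × ℝ) → ℝ}
    {c : Equiv.Perm (Fin k) → ℝ} (hg : Integrable g (Measure.pi fun _ => μ))
    (hc : ∀ π, ∀ p ∈ patternEvent π, ∑ σ : Equiv.Perm (Fin k), g (p ∘ σ) = c π) :
    k.factorial * ∫ p, g p ∂Measure.pi (fun _ => μ) = ∑ π, c π * PermutonDensity π μ := by
  have hperm (σ : Equiv.Perm (Fin k)) :
      ∫ p, g (p ∘ σ) ∂Measure.pi (fun _ => μ) = ∫ p, g p ∂Measure.pi (fun _ => μ) := by
    have hσ := measurePreserving_pi_comp_perm μ σ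
    rw [← integral_map hσ.measurable.aemeasurable (hσ.map_eq.symm ▸ hg.aestronglyMeasurable),
      hσ.map_eq]
  have hsum : ∀ᵐ p ∂Measure.pi fun _ : Fin k => μ,
      ∑ σ : Equiv.Perm (Fin k), g (p ∘ σ) = ∑ π, (patternEvent π).indicator (fun _ => c π) p := by
    filter_upwards [ae_exists_mem_patternEvent μ] with p ⟨π, hπ⟩
    rw [hc π p hπ, Finset.sum_eq_single_of_mem π (Finset.mem_univ π), indicator_of_mem hπ]
    exact fun τ _ hne => indicator_of_notMem (fun hτ => hne (eq_of_mem_patternEvent hτ hπ)) _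
  calc k.factorial * ∫ p, g p ∂Measure.pi (fun _ => μ)
    _ = ∫ p, ∑ σ : Equiv.Perm (Fin k), g (p ∘ σ) ∂Measure.pi (fun _ => μ) := by
      have hint (σ : Equiv.Perm (Fin k)) :
          Integrable (fun p => g (p ∘ σ)) (Measure.pi fun _ : Fin k => μ) :=
        (measurePreserving_pi_comp_perm μ σ).integrable_comp_of_integrable hg
      rw [integral_finsetSum _ fun σ _ => hint σ]
      simp [hperm, Fintype.card_perm]
    _ = ∫ p, ∑ π, (patternEvent π).indicator (fun _ => c π) p ∂Measure.pi (fun _ => μ) :=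
      integral_congr_ae hsum
    _ = ∑ π, c π * PermutonDensity π μ := by
      rw [integral_finsetSum _ fun π _ =>
        (integrable_const (c π)).indicator (measurableSet_patternEvent π)]
      congr! 1 with π
      rw [integral_indicator_const _ (measurableSet_patternEvent π), smul_eq_mul, mul_comm]
      rfl

end Patterns

section Kernel

/-- The set of the eight patterns 1234, 1243, 2134, 2143, 3412, 3421, 4312, 4321. -/
noncomputable def forcingPatterns : Finset (Equiv.Perm (Fin 4)) :=
  {mk4 0 1 2 3, mk4 0 1 3 2, mk4 1 0 2 3, mk4 1 0 3 2,
    mk4 2 3 0 1, mk4 2 3 1 0, mk4 3 2 0 1, mk4 3 2 1 0}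

/-- A function of four points whose sum over all orderings of the points is `24` times the
indicator of `forcingPatterns`, while its expectation under sampling from `μ` is a quadratic
expression in the distribution function of `μ`. -/
def cdfKernel {R S : Type*} [LinearOrder R] [LinearOrder S] (p : Fin 4 → R × S) : ℤ :=
  12 * (if p 2 ≤ p 0 ∧ p 3 ≤ p 0 then 1 else 0)
    - 24 * (if p 1 ≤ p 0 ∧ (p 2).1 ≤ (p 0).1 ∧ (p 3).2 ≤ (p 0).2 then 1 else 0)
    + 24 * (if p 2 ≤ ((p 0).1, (p 1).2) ∧ p 3 ≤ ((p 0).1, (p 1).2) then 1 else 0)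
    - 1

theorem cdfKernel_congr {R S R' S' : Type*} [LinearOrder R] [LinearOrder S] [LinearOrder R']
    [LinearOrder S'] {p : Fin 4 → R × S} {q : Fin 4 → R' × S'}
    (h₁ : ∀ i j, (p i).1 ≤ (p j).1 ↔ (q i).1 ≤ (q j).1)
    (h₂ : ∀ i j, (p i).2 ≤ (p j).2 ↔ (q i).2 ≤ (q j).2) : cdfKernel p = cdfKernel q := by
  simp only [cdfKernel, Prod.le_def, h₁, h₂]

theorem sum_cdfKernel_perm : ∀ π : Equiv.Perm (Fin 4),
    ∑ σ : Equiv.Perm (Fin 4), cdfKernel (fun i => (σ i, π (σ i))) =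
      if π ∈ forcingPatterns then 24 else 0 := by
  decide +kernel

theorem sum_cdfKernel_comp {R S : Type*} [LinearOrder R] [LinearOrder S]
    {π : Equiv.Perm (Fin 4)} {p : Fin 4 → R × S} (hp : p ∈ patternEvent π) :
    ∑ σ : Equiv.Perm (Fin 4), cdfKernel (p ∘ σ) = if π ∈ forcingPatterns then 24 else 0 := by
  obtain ⟨ρ, hx, hy⟩ := hp
  have hcongr (σ : Equiv.Perm (Fin 4)) :
      cdfKernel (fun i => p (ρ (σ i))) = cdfKernel fun i => (σ i, π (σ i)) :=
    cdfKernel_congr (fun _ _ => hx.le_iff_le)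
      fun i j => by simpa only [not_lt] using not_congr (hy (σ j) (σ i))
  rw [← sum_cdfKernel_perm π, ← Equiv.sum_comp (Equiv.mulLeft ρ)]
  exact Finset.sum_congr rfl fun σ _ => hcongr σ

theorem cast_comp_cdfKernel {R S : Type*} [LinearOrder R] [LinearOrder S] :
    (fun p : Fin 4 → R × S => (cdfKernel p : ℝ)) =
      (12 : ℝ) • {p | p 2 ≤ p 0 ∧ p 3 ≤ p 0}.indicator 1
        - (24 : ℝ) • {p | p 1 ≤ p 0 ∧ (p 2).1 ≤ (p 0).1 ∧ (p 3).2 ≤ (p 0).2}.indicator 1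
        + (24 : ℝ) • {p | p 2 ≤ ((p 0).1, (p 1).2) ∧ p 3 ≤ ((p 0).1, (p 1).2)}.indicator 1
        - 1 := by
  ext p
  simp only [cdfKernel, indicator_apply, mem_ofPred_eq, Pi.one_apply, Pi.sub_apply, Pi.add_apply,
    Pi.smul_apply, smul_eq_mul]
  push_cast
  rfl

section CdfKernel

variable {R S : Type*} [LinearOrder R] [TopologicalSpace R] [OrderClosedTopology R]
  [SecondCountableTopology R] [MeasurableSpace R] [OpensMeasurableSpace R] [LinearOrder S]
  [TopologicalSpace S] [OrderClosedTopology S] [SecondCountableTopology S] [MeasurableSpace S]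
  [OpensMeasurableSpace S] (μ : Measure (R × S)) [IsProbabilityMeasure μ]

theorem measureReal_pi_two_le :
    (Measure.pi fun _ : Fin 4 => μ).real {p | p 2 ≤ p 0 ∧ p 3 ≤ p 0} =
      ∫ z, μ.real (Iic z) * μ.real (Iic z) ∂μ := by
  have hS : MeasurableSet {q : ((R × S) × (R × S)) × (R × S) | q.2 ≤ q.1.1} :=
    measurableSet_le (by fun_prop) (by fun_prop)
  have h := measureReal_pi_fin_four μ .univ hS hS
  have hfst := integral_fun_fst (μ := μ) (ν := μ) fun z => μ.real (Iic z) * μ.real (Iic z)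
  simp only [setIntegral_univ, probReal_univ, one_smul] at h hfst
  simpa using h.trans hfst

theorem measureReal_pi_le_and_marginals_le :
    (Measure.pi fun _ : Fin 4 => μ).real
        {p | p 1 ≤ p 0 ∧ (p 2).1 ≤ (p 0).1 ∧ (p 3).2 ≤ (p 0).2} =
      ∫ z, μ.real (Iic z) * (μ.fst.prod μ.snd).real (Iic z) ∂μ := by
  have hD : MeasurableSet {w : (R × S) × (R × S) | w.2 ≤ w.1} :=
    measurableSet_le (by fun_prop) (by fun_prop)
  have hS : MeasurableSet {q : ((R × S) × (R × S)) × (R × S) | q.2.1 ≤ q.1.1.1} :=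
    measurableSet_le (by fun_prop) (by fun_prop)
  have hT : MeasurableSet {q : ((R × S) × (R × S)) × (R × S) | q.2.2 ≤ q.1.1.2} :=
    measurableSet_le (by fun_prop) (by fun_prop)
  have hV (z : R × S) : μ.real {q | q.1 ≤ z.1} * μ.real {q | q.2 ≤ z.2} =
      (μ.fst.prod μ.snd).real (Iic z) := by
    rw [measureReal_prod_Iic, Measure.fst, Measure.snd,
      map_measureReal_apply measurable_fst measurableSet_Iic,
      map_measureReal_apply measurable_snd measurableSet_Iic]
    rfl
  calc
    _ = ∫ w in {w : (R × S) × (R × S) | w.2 ≤ w.1},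
        (μ.fst.prod μ.snd).real (Iic w.1) ∂μ.prod μ := by
      simp only [← hV]
      exact measureReal_pi_fin_four μ hD hS hT
    _ = _ := setIntegral_prod_comp_fst μ hD (integrable_measureReal_Iic measurableSet_le' _ μ)

theorem measureReal_pi_two_le_mixed :
    (Measure.pi fun _ : Fin 4 => μ).real
        {p | p 2 ≤ ((p 0).1, (p 1).2) ∧ p 3 ≤ ((p 0).1, (p 1).2)} =
      ∫ z, μ.real (Iic z) * μ.real (Iic z) ∂μ.fst.prod μ.snd := by
  have hS : MeasurableSet {q : ((R × S) × (R × S)) × (R × S) | q.2 ≤ (q.1.1.1, q.1.2.2)} :=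
    measurableSet_le (by fun_prop) (by fun_prop)
  have hF := integrable_measureReal_Iic_mul measurableSet_le' μ μ
    ((μ.prod μ).map (Prod.map Prod.fst Prod.snd))
  rw [Measure.fst, Measure.snd, Measure.map_prod_map _ _ measurable_fst measurable_snd,
    integral_map (by fun_prop) hF.aestronglyMeasurable]
  have h := measureReal_pi_fin_four μ .univ hS hS
  simp only [setIntegral_univ, mem_univ, true_and] at h
  exact h

theorem integrable_cdfKernel (ρ : Measure (Fin 4 → R × S)) [IsFiniteMeasure ρ] :
    Integrable (fun p => (cdfKernel p : ℝ)) ρ := by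
  rw [cast_comp_cdfKernel]
  refine (((Integrable.smul _ ?_).sub (.smul _ ?_)).add (.smul _ ?_)).sub (integrable_const 1)
  all_goals exact (integrable_const 1).indicator (by measurability)

theorem integral_cdfKernel :
    ∫ p, (cdfKernel p : ℝ) ∂Measure.pi (fun _ => μ) =
      12 * ∫ z, μ.real (Iic z) * μ.real (Iic z) ∂μ
        - 24 * ∫ z, μ.real (Iic z) * (μ.fst.prod μ.snd).real (Iic z) ∂μ
        + 24 * ∫ z, μ.real (Iic z) * μ.real (Iic z) ∂μ.fst.prod μ.snd
        - 1 := by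
  have h₁ : MeasurableSet {p : Fin 4 → R × S | p 2 ≤ p 0 ∧ p 3 ≤ p 0} := by measurability
  have h₂ : MeasurableSet
      {p : Fin 4 → R × S | p 1 ≤ p 0 ∧ (p 2).1 ≤ (p 0).1 ∧ (p 3).2 ≤ (p 0).2} := by measurability
  have h₃ : MeasurableSet
      {p : Fin 4 → R × S | p 2 ≤ ((p 0).1, (p 1).2) ∧ p 3 ≤ ((p 0).1, (p 1).2)} := by
    measurability
  have hone : Integrable (1 : (Fin 4 → R × S) → ℝ) (Measure.pi fun _ => μ) := integrable_const 1
  have hint {s : Set (Fin 4 → R × S)} (hs : MeasurableSet s) (c : ℝ) :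
      Integrable (c • s.indicator (1 : (Fin 4 → R × S) → ℝ)) (Measure.pi fun _ => μ) :=
    (hone.indicator hs).smul c
  rw [cast_comp_cdfKernel,
    integral_sub' (((hint h₁ 12).sub (hint h₂ 24)).add (hint h₃ 24)) hone,
    integral_add' ((hint h₁ 12).sub (hint h₂ 24)) (hint h₃ 24),
    integral_sub' (hint h₁ 12) (hint h₂ 24)]
  simp only [Pi.smul_apply, Pi.one_apply, smul_eq_mul, integral_const_mul,
    integral_indicator_one h₁, integral_indicator_one h₂, integral_indicator_one h₃,
    measureReal_pi_two_le, measureReal_pi_le_and_marginals_le, measureReal_pi_two_le_mixed,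
    integral_const, probReal_univ, one_mul]

end CdfKernel

variable (μ : Measure (ℝ × ℝ)) [IsProbabilityMeasure μ] [NullSingletonClass μ.fst]
  [NullSingletonClass μ.snd]

theorem sum_permutonDensity_forcingPatterns_eq_integral_cdfKernel :
    ∑ π ∈ forcingPatterns, PermutonDensity π μ =
      ∫ p, (cdfKernel p : ℝ) ∂Measure.pi (fun _ => μ) := by
  have hc (π : Equiv.Perm (Fin 4)) (p : Fin 4 → ℝ × ℝ) (hp : p ∈ patternEvent π) :
      ∑ σ : Equiv.Perm (Fin 4), (cdfKernel (p ∘ σ) : ℝ) = if π ∈ forcingPatterns then 24 else 0 :=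
    mod_cast sum_cdfKernel_comp hp
  have h := factorial_mul_integral_eq_sum_permutonDensity (μ := μ) (integrable_cdfKernel _) hc
  simp only [ite_mul, zero_mul, Finset.sum_ite_mem, Finset.univ_inter, ← Finset.mul_sum] at h
  have hfactorial : (Nat.factorial 4 : ℝ) = 24 := by norm_num [Nat.factorial]
  rw [hfactorial] at h
  linarith

theorem sum_permutonDensity_eq_add_integral_independenceDefect_sq :
    ∑ π ∈ forcingPatterns, PermutonDensity π μ =
      1 / 3 + 12 * ∫ z, independenceDefect μ z ^ 2 ∂μ
        + 24 * ∫ z, independenceDefect μ z ^ 2 ∂μ.fst.prod μ.snd := by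
  rw [sum_permutonDensity_forcingPatterns_eq_integral_cdfKernel, integral_cdfKernel,
    integral_independenceDefect_sq, integral_independenceDefect_sq,
    integral_measureReal_Iic_mul_prod, integral_measureReal_prod_Iic_mul_self]
  ring

end Kernel

section Uniqueness

section Marginal

variable {R : Type*} [LinearOrder R] [TopologicalSpace R] [OrderClosedTopology R]
  [SecondCountableTopology R] [MeasurableSpace R] [OpensMeasurableSpace R]
  (α : Measure R) [IsFiniteMeasure α] [α.InnerRegularCompactLTTop]

theorem measureReal_setOf_measureReal_Iic_le {c : ℝ} (hc : 0 ≤ c) :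
    α.real {t | α.real (Iic t) ≤ c} ≤ c := by
  have hmeas : MeasurableSet {t | α.real (Iic t) ≤ c} :=
    measurableSet_le (measurable_measureReal_Iic measurableSet_le' α) measurable_const
  by_contra! hlt
  obtain ⟨K, hKsub, hK, hcK⟩ := hmeas.exists_lt_isCompact
    ((ENNReal.ofReal_lt_iff_lt_toReal hc (measure_ne_top α _)).2 hlt)
  have hKne : K.Nonempty := nonempty_of_measure_ne_zero (hcK.trans_le' zero_le).ne'
  obtain ⟨m, hmK, hm⟩ := hK.exists_isGreatest hKne
  have hKm : α.real K ≤ α.real (Iic m) := measureReal_mono hm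
  exact ((ENNReal.ofReal_lt_iff_lt_toReal hc (measure_ne_top α _)).1 hcK).not_ge
    (hKm.trans (hKsub hmK))

theorem measure_Iic_inter_setOf_lt_measureReal_Iic_ne_zero {c : ℝ} (hc : 0 ≤ c) {x : R}
    (hx : c < α.real (Iic x)) : α (Iic x ∩ {t | c < α.real (Iic t)}) ≠ 0 := fun hzero => by
  have hsub : Iic x ⊆ (Iic x ∩ {t | c < α.real (Iic t)}) ∪ {t | α.real (Iic t) ≤ c} :=
    fun t ht => (lt_or_ge c (α.real (Iic t))).imp (And.intro ht) id
  have h := (measureReal_mono (μ := α) hsub).trans (measureReal_union_le _ _)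
  rw [measureReal_def α (_ ∩ _), hzero, ENNReal.toReal_zero, zero_add] at h
  linarith [measureReal_setOf_measureReal_Iic_le α hc]

end Marginal

section Product

variable {R S : Type*} [MeasurableSpace R] [MeasurableSpace S]

theorem fst_restrict_preimage_snd_apply (μ : Measure (R × S)) {s : Set R} (hs : MeasurableSet s)
    (t : Set S) : (μ.restrict (Prod.snd ⁻¹' t)).fst s = μ (s ×ˢ t) := by
  rw [Measure.fst_apply hs, Measure.restrict_apply (measurable_fst hs)]
  rfl

theorem snd_restrict_preimage_fst_apply (μ : Measure (R × S)) (s : Set R) {t : Set S}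
    (ht : MeasurableSet t) : (μ.restrict (Prod.fst ⁻¹' s)).snd t = μ (s ×ˢ t) := by
  rw [Measure.snd_apply ht, Measure.restrict_apply (measurable_snd ht), inter_comm]
  rfl

theorem measureReal_Iic_le_fst [Preorder R] [Preorder S] (μ : Measure (R × S)) [IsFiniteMeasure μ]
    {z : R × S} (hz : MeasurableSet (Iic z.1)) : μ.real (Iic z) ≤ μ.fst.real (Iic z.1) := by
  rw [Measure.fst, map_measureReal_apply measurable_fst hz]
  exact measureReal_mono fun q hq => hq.1

theorem measureReal_Iic_le_snd [Preorder R] [Preorder S] (μ : Measure (R × S)) [IsFiniteMeasure μ]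
    {z : R × S} (hz : MeasurableSet (Iic z.2)) : μ.real (Iic z) ≤ μ.snd.real (Iic z.2) := by
  rw [Measure.snd, map_measureReal_apply measurable_snd hz]
  exact measureReal_mono fun q hq => hq.2

variable [LinearOrder R] [TopologicalSpace R] [LinearOrder S] [TopologicalSpace S]

variable [OrderClosedTopology R] [OpensMeasurableSpace R] [OrderClosedTopology S]
  [OpensMeasurableSpace S]

theorem measureReal_Iic_le_add (μ : Measure (R × S)) [IsFiniteMeasure μ] {z' z : R × S}
    (h : z' ≤ z) :
    μ.real (Iic z) ≤ μ.real (Iic z') + (μ.fst.real (Iic z.1) - μ.fst.real (Iic z'.1)) +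
      (μ.snd.real (Iic z.2) - μ.snd.real (Iic z'.2)) := by
  have hsub : Iic z ⊆ Iic z' ∪ Prod.fst ⁻¹' (Iic z.1 \ Iic z'.1) ∪
      Prod.snd ⁻¹' (Iic z.2 \ Iic z'.2) := fun q hq => by
    have := hq.1
    have := hq.2
    simp only [mem_union, mem_Iic, Prod.le_def, mem_preimage, Set.mem_sdiff]
    tauto
  have hfst : μ.real (Prod.fst ⁻¹' (Iic z.1 \ Iic z'.1)) =
      μ.fst.real (Iic z.1) - μ.fst.real (Iic z'.1) := by
    rw [← measureReal_sdiff (Iic_subset_Iic.2 h.1) measurableSet_Iic, Measure.fst,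
      map_measureReal_apply measurable_fst (measurableSet_Iic.diff measurableSet_Iic)]
  have hsnd : μ.real (Prod.snd ⁻¹' (Iic z.2 \ Iic z'.2)) =
      μ.snd.real (Iic z.2) - μ.snd.real (Iic z'.2) := by
    rw [← measureReal_sdiff (Iic_subset_Iic.2 h.2) measurableSet_Iic, Measure.snd,
      map_measureReal_apply measurable_snd (measurableSet_Iic.diff measurableSet_Iic)]
  rw [← hfst, ← hsnd]
  exact (measureReal_mono hsub).trans
    ((measureReal_union_le _ _).trans (add_le_add_left (measureReal_union_le _ _) _))

variable [SecondCountableTopology R] [SecondCountableTopology S] {μ ν : Measure (R × S)}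
  [IsFiniteMeasure μ] [IsFiniteMeasure ν] [μ.fst.InnerRegularCompactLTTop]
  [μ.snd.InnerRegularCompactLTTop]

theorem measureReal_Iic_le_of_ae_prod
    (hle : ∀ᵐ z ∂μ.fst.prod μ.snd, μ.real (Iic z) ≤ ν.real (Iic z)) (z : R × S) :
    μ.real (Iic z) ≤ ν.real (Iic z) := by
  rcases (measureReal_nonneg (μ := μ.fst) (s := Iic z.1)).eq_or_lt with hA | hA
  · exact (measureReal_Iic_le_fst μ measurableSet_Iic).trans (hA.symm.le.trans measureReal_nonneg)
  rcases (measureReal_nonneg (μ := μ.snd) (s := Iic z.2)).eq_or_lt with hB | hB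
  · exact (measureReal_Iic_le_snd μ measurableSet_Iic).trans (hB.symm.le.trans measureReal_nonneg)
  -- The inequality holds at some `z' ≤ z` losing less than `ε / 2` of each marginal mass.
  refine le_of_forall_pos_le_add fun ε hε => ?_
  have hA' := measure_Iic_inter_setOf_lt_measureReal_Iic_ne_zero μ.fst
    (c := max (μ.fst.real (Iic z.1) - ε / 2) 0) (le_max_right _ _) (max_lt (by linarith) hA)
  have hB' := measure_Iic_inter_setOf_lt_measureReal_Iic_ne_zero μ.snd
    (c := max (μ.snd.real (Iic z.2) - ε / 2) 0) (le_max_right _ _) (max_lt (by linarith) hB)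
  have hrect := mul_ne_zero hA' hB'
  rw [← Measure.prod_prod] at hrect
  obtain ⟨z', ⟨⟨hx, hxA⟩, hy, hyB⟩, hz'⟩ :=
    Measure.exists_mem_of_measure_ne_zero_of_ae hrect (ae_restrict_of_ae hle)
  rw [mem_ofPred_eq, max_lt_iff] at hxA hyB
  have hmono : ν.real (Iic z') ≤ ν.real (Iic z) := measureReal_mono (Iic_subset_Iic.2 ⟨hx, hy⟩)
  linarith [measureReal_Iic_le_add μ (z' := z') (z := z) ⟨hx, hy⟩]

end Product

section Rigidity

variable {R S : Type*} [LinearOrder R] [TopologicalSpace R] [OrderTopology R]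
  [SecondCountableTopology R] [MeasurableSpace R] [BorelSpace R] [LinearOrder S]
  [TopologicalSpace S] [OrderTopology S] [SecondCountableTopology S] [MeasurableSpace S]
  [BorelSpace S] {μ ν : Measure (R × S)}

theorem eq_of_measureReal_Iic_eq [IsFiniteMeasure μ] [IsFiniteMeasure ν]
    (h : ∀ z, μ.real (Iic z) = ν.real (Iic z)) : μ = ν := by
  have hIic (x : R) (y : S) : μ (Iic x ×ˢ Iic y) = ν (Iic x ×ˢ Iic y) := by
    simpa only [measureReal_def, ENNReal.toReal_eq_toReal_iff' (measure_ne_top _ _)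
      (measure_ne_top _ _), Iic_prod_eq] using h (x, y)
  have hprod_Iic {s : Set R} (hs : MeasurableSet s) (y : S) :
      μ (s ×ˢ Iic y) = ν (s ×ˢ Iic y) := by
    rw [← fst_restrict_preimage_snd_apply μ hs, ← fst_restrict_preimage_snd_apply ν hs]
    congr 1
    refine Measure.ext_of_Iic _ _ fun x => ?_
    simp only [fst_restrict_preimage_snd_apply _ measurableSet_Iic, hIic]
  refine Measure.ext_prod fun {s t} hs ht => ?_
  rw [← snd_restrict_preimage_fst_apply μ s ht, ← snd_restrict_preimage_fst_apply ν s ht]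
  congr 1
  refine Measure.ext_of_Iic _ _ fun y => ?_
  simp only [snd_restrict_preimage_fst_apply _ _ measurableSet_Iic, hprod_Iic hs]

theorem eq_of_ae_measureReal_Iic_eq [IsFiniteMeasure μ] [IsFiniteMeasure ν]
    [μ.fst.InnerRegularCompactLTTop] [μ.snd.InnerRegularCompactLTTop] (hfst : μ.fst = ν.fst)
    (hsnd : μ.snd = ν.snd)
    (h : ∀ᵐ z ∂μ.fst.prod μ.snd, μ.real (Iic z) = ν.real (Iic z)) : μ = ν := by
  have : ν.fst.InnerRegularCompactLTTop := hfst ▸ inferInstance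
  have : ν.snd.InnerRegularCompactLTTop := hsnd ▸ inferInstance
  refine eq_of_measureReal_Iic_eq fun z => le_antisymm ?_ ?_
  · exact measureReal_Iic_le_of_ae_prod (h.mono fun _ => le_of_eq) z
  · rw [hfst, hsnd] at h
    exact measureReal_Iic_le_of_ae_prod (h.mono fun _ => ge_of_eq) z

theorem eq_prod_iff_integral_independenceDefect_sq_eq_zero [IsProbabilityMeasure μ]
    [μ.fst.InnerRegularCompactLTTop] [μ.snd.InnerRegularCompactLTTop] :
    μ = μ.fst.prod μ.snd ↔ ∫ z, independenceDefect μ z ^ 2 ∂μ.fst.prod μ.snd = 0 := by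
  refine ⟨fun h => ?_, fun h => ?_⟩
  · simp [independenceDefect, ← h]
  rw [integral_eq_zero_iff_of_nonneg (fun z => sq_nonneg _)
    (integrable_independenceDefect_sq μ _)] at h
  refine eq_of_ae_measureReal_Iic_eq (by rw [Measure.fst_prod]) (by rw [Measure.snd_prod]) ?_
  exact h.mono fun z hz => sub_eq_zero.1 (sq_eq_zero_iff.1 hz)

end Rigidity

end Uniqueness

theorem statement_7_general (μ : Measure (ℝ × ℝ)) [IsProbabilityMeasure μ]
    [NullSingletonClass μ.fst] [NullSingletonClass μ.snd] :
    1 / 3 ≤ ∑ π ∈ forcingPatterns, PermutonDensity π μ ∧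
      (∑ π ∈ forcingPatterns, PermutonDensity π μ = 1 / 3 ↔ μ = μ.fst.prod μ.snd) := by
  have hμ_nonneg : 0 ≤ ∫ z, independenceDefect μ z ^ 2 ∂μ := integral_nonneg fun z => sq_nonneg _
  have hprod_nonneg : 0 ≤ ∫ z, independenceDefect μ z ^ 2 ∂μ.fst.prod μ.snd :=
    integral_nonneg fun z => sq_nonneg _
  rw [sum_permutonDensity_eq_add_integral_independenceDefect_sq]
  refine ⟨by linarith, fun h => ?_, fun h => ?_⟩
  · exact (eq_prod_iff_integral_independenceDefect_sq_eq_zero (μ := μ)).2 (by linarith)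
  · have hzero := (eq_prod_iff_integral_independenceDefect_sq_eq_zero (μ := μ)).1 h
    rw [← h] at hzero ⊢
    rw [hzero]
    norm_num

section Permuton

variable {μ : Measure (ℝ × ℝ)}

theorem IsPermuton.fst_eq_s7 (hμ : IsPermuton μ) : μ.fst = volume.restrict (Icc 0 1) := by
  have := hμ.1
  have hsquare : μ (Icc 0 1 ×ˢ Icc 0 1) = 1 := by
    rw [hμ.2.1 0 1 le_rfl zero_le_one le_rfl, sub_zero, ENNReal.ofReal_one]
  have hsquare_ae : ∀ᵐ p ∂μ, p ∈ Icc (0 : ℝ) 1 ×ˢ Icc (0 : ℝ) 1 :=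
    (mem_ae_iff_prob_eq_one (measurableSet_Icc.prod measurableSet_Icc)).2 hsquare
  refine Measure.ext_of_Iic _ _ fun a => ?_
  have hIcc : Iic a ∩ Icc 0 1 = Icc 0 (min a 1) := by
    ext x
    simp only [mem_inter_iff, mem_Iic, mem_Icc, le_inf_iff]
    tauto
  have hrect : Prod.fst ⁻¹' Iic a ∩ Icc 0 1 ×ˢ Icc 0 1 = Icc 0 (min a 1) ×ˢ Icc (0 : ℝ) 1 := by
    rw [← hIcc, ← prod_univ, prod_inter_prod, univ_inter]
  calc μ.fst (Iic a) = μ (Icc 0 (min a 1) ×ˢ Icc 0 1) := by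
        rw [Measure.fst_apply measurableSet_Iic, ← hrect, inter_comm,
          Measure.measure_inter_eq_of_ae hsquare_ae]
    _ = volume (Icc 0 (min a 1)) := by
        rcases le_or_gt 0 (min a 1) with ha | ha
        · rw [hμ.2.1 0 _ le_rfl ha (min_le_right a 1), Real.volume_Icc]
        · rw [Icc_eq_empty ha.not_ge, empty_prod, measure_empty, measure_empty]
    _ = volume.restrict (Icc 0 1) (Iic a) := by
        rw [Measure.restrict_apply measurableSet_Iic, hIcc]

theorem IsPermuton.map_swap_s7 (hμ : IsPermuton μ) : IsPermuton (μ.map Prod.swap) := by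
  have := hμ.1
  refine ⟨Measure.isProbabilityMeasure_map measurable_swap.aemeasurable, fun x x' h0 h h1 => ?_,
    fun y y' h0 h h1 => ?_⟩
  · rw [Measure.map_apply measurable_swap (measurableSet_Icc.prod measurableSet_Icc),
      preimage_swap_prod, hμ.2.2 x x' h0 h h1]
  · rw [Measure.map_apply measurable_swap (measurableSet_Icc.prod measurableSet_Icc),
      preimage_swap_prod, hμ.2.1 y y' h0 h h1]

theorem IsPermuton.snd_eq_s7 (hμ : IsPermuton μ) : μ.snd = volume.restrict (Icc 0 1) := by
  rw [← Measure.fst_map_swap, hμ.map_swap_s7.fst_eq_s7]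

theorem IsPermuton.fst_prod_snd (hμ : IsPermuton μ) : μ.fst.prod μ.snd = uniformPermuton := by
  rw [hμ.fst_eq_s7, hμ.snd_eq_s7, Measure.prod_restrict]
  rfl

end Permuton

theorem statement_7 (μ : Measure (ℝ × ℝ)) (hμ : IsPermuton μ) :
    (1 / 3 : ℝ) ≤ ∑ π ∈ ({
        mk4 0 1 2 3,
        mk4 0 1 3 2,
        mk4 1 0 2 3,
        mk4 1 0 3 2,
        mk4 2 3 0 1,
        mk4 2 3 1 0,
        mk4 3 2 0 1,
        mk4 3 2 1 0} : Finset (Equiv.Perm (Fin 4))), PermutonDensity π μ ∧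
      (∑ π ∈ ({
        mk4 0 1 2 3,
        mk4 0 1 3 2,
        mk4 1 0 2 3,
        mk4 1 0 3 2,
        mk4 2 3 0 1,
        mk4 2 3 1 0,
        mk4 3 2 0 1,
        mk4 3 2 1 0} : Finset (Equiv.Perm (Fin 4))), PermutonDensity π μ = (1 / 3 : ℝ) ↔
        μ = uniformPermuton) := by
  have := hμ.1
  have : NullSingletonClass μ.fst := by rw [hμ.fst_eq_s7]; infer_instance
  have : NullSingletonClass μ.snd := by rw [hμ.snd_eq_s7]; infer_instance
  exact hμ.fst_prod_snd ▸ statement_7_general μ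
end
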